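/- A category enriched in k-vector spaces is Krull–Schmidt (every object decomposes uniquely as a finite direct sum of objects with local endomorphism rings) if and only if all idempotents split, assuming all hom spaces are finite dimensional and the category is additive. -/

import Mathlib

open CategoryTheory CategoryTheory.Limits

/-- A category is Krull–Schmidt if every object decomposes as a finite direct sum
of objects with local endomorphism rings, and such decompositions are unique up
to permutation and isomorphism of the summands. -/
def IsKrullSchmidt (C : Type*) [Category C] [Preadditive C] [HasFiniteBiproducts C] :
    Prop :=
  (∀ x : C, ∃ (n : ℕ) (f : Fin n → C),
      (∀ i, IsLocalRing (End (f i))) ∧ Nonempty (x ≅ biproduct f)) ∧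
  (∀ (r s : ℕ) (f : Fin r → C) (g : Fin s → C),
      (∀ i, IsLocalRing (End (f i))) → (∀ j, IsLocalRing (End (g j))) →
      Nonempty (biproduct f ≅ biproduct g) →
      ∃ (h : r = s) (σ : Equiv.Perm (Fin r)),
        ∀ i, Nonempty (f i ≅ g (Fin.cast h (σ i))))

/-!
Suppose first that idempotents split. If `L` has a local endomorphism ring and `L ⊞ X ≅ A ⊞ B`, then
`𝟙 L` is the sum of a composite through `A` and a composite through `B`, so one of the two is
invertible; this splits `L` off `A` or off `B`, and Gaussian elimination cancels it against the
left-hand side. Hence a direct summand of a finite sum of objects with local endomorphism rings is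
again such a sum.

If now every object of `C` is such a sum, apply this in the Karoubi envelope, where each object `P`
is a summand of the image of an object of `C`: thus `P` itself is a finite sum of objects coming
from `C`, so `C` is equivalent to its Karoubi envelope.

Conversely, the left ideals generated by the idempotents of the retracts of `X` descend strictly
along proper retracts, so `X` is a finite sum of indecomposables when `End X` is Artinian. Once
idempotents split, Fitting's lemma makes the endomorphism rings of these indecomposables local.
Uniqueness is the same exchange argument, where no splitting is needed because a split monomorphism
from a nonzero object to one with local endomorphism ring is an isomorphism.
-/

section Rings

theorem exists_isIdempotentElem_isUnit_isNilpotent {R M : Type*} [Ring R] [AddCommGroup M]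
    [Module R M] [IsArtinian R M] [IsNoetherian R M] (a : Module.End R M) :
    ∃ e : Module.End R M, IsIdempotentElem e ∧ (e = 0 → IsUnit a) ∧ (e = 1 → IsNilpotent a) := by
  obtain ⟨n, hcompl, hn⟩ :=
    (a.eventually_isCompl_ker_pow_range_pow.and (Filter.eventually_ne_atTop 0)).exists
  let e := (LinearMap.ker (a ^ n)).projection (LinearMap.range (a ^ n)) hcompl
  have range_e : LinearMap.range e = LinearMap.ker (a ^ n) := Submodule.range_projection hcompl
  refine ⟨e, Submodule.isIdempotentElem_projection hcompl, fun he => ?_, fun he => ⟨n, ?_⟩⟩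
  · have injective_pow : Function.Injective (a ^ n) := by
      rw [← LinearMap.ker_eq_bot, ← range_e, he, LinearMap.range_zero]
    exact (isUnit_pow_iff hn).mp <| (Module.End.isUnit_iff _).mpr <|
      IsArtinian.bijective_of_injective_endomorphism _ injective_pow
  · rw [← LinearMap.ker_eq_top, ← range_e, he, Module.End.one_eq_id, LinearMap.range_id]

variable {A : Type*} [Ring A]

theorem isLocalRing_of_isIdempotentElem [IsArtinianRing A] [Nontrivial A]
    (h : ∀ e : A, IsIdempotentElem e → e = 0 ∨ e = 1) : IsLocalRing A where
  isUnit_or_isUnit_of_add_one {a b} hab := by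
    let φ := RingEquiv.moduleEndSelf A
    obtain ⟨e, he, isUnit_a, isNilpotent_a⟩ :=
      exists_isIdempotentElem_isUnit_isNilpotent (φ (.op a))
    obtain ⟨e, rfl⟩ := φ.surjective e
    have idem : IsIdempotentElem e.unop :=
      congrArg MulOpposite.unop (φ.injective ((map_mul φ e e).trans he))
    refine (h e.unop idem).imp (fun he0 => ?_) (fun he1 => ?_)
    · obtain rfl : e = 0 := MulOpposite.unop_injective he0
      simpa using isUnit_a (map_zero φ)
    · obtain rfl : e = 1 := MulOpposite.unop_injective he1
      obtain ⟨n, hn⟩ := (IsNilpotent.map_iff φ.injective).mp (isNilpotent_a (map_one φ))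
      have : IsNilpotent a := ⟨n, MulOpposite.op_injective hn⟩
      exact eq_sub_of_add_eq' hab ▸ this.isUnit_one_sub

theorem eq_zero_or_one_of_isIdempotentElem [IsLocalRing A] {e : A} (he : IsIdempotentElem e) :
    e = 0 ∨ e = 1 := by
  rcases IsLocalRing.isUnit_or_isUnit_of_add_one (add_sub_cancel e 1) with h | h
  · exact Or.inr (h.mul_left_cancel (by rw [he.eq, mul_one]))
  · exact Or.inl (h.mul_left_cancel (by rw [he.one_sub_mul_self, mul_zero]))

end Rings

section Preadditive

variable {C : Type*} [Category C]

theorem not_isZero_of_nontrivial_end (X : C) [Nontrivial (End X)] : ¬ IsZero X := fun hX =>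
  have ⟨f, g, hfg⟩ := exists_pair_ne (End X)
  hfg (hX.eq_of_src f g)

variable [Preadditive C]

theorem isIso_of_isSplitMono_of_isLocalRing_end {X Y : C} [IsLocalRing (End Y)] (hX : ¬ IsZero X)
    (i : X ⟶ Y) [IsSplitMono i] : IsIso i := by
  have idem : IsIdempotentElem (M := End Y) (retraction i ≫ i) := by
    simp [IsIdempotentElem, End.mul_def]
  rcases eq_zero_or_one_of_isIdempotentElem idem with (h : retraction i ≫ i = 0) | h
  · have hi : i = 0 := by rw [← IsSplitMono.id_assoc i i, h, comp_zero]
    exact absurd (IsZero.of_mono_eq_zero i hi) hX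
  · exact ⟨retraction i, IsSplitMono.id i, h⟩

theorem isLocalRing_end_obj {D : Type*} [Category D] [Preadditive D] (F : C ⥤ D) [F.Additive]
    [F.Full] [F.Faithful] (X : C) [IsLocalRing (End X)] : IsLocalRing (End (F.obj X)) := by
  let preimageHom : End (F.obj X) →+* End X :=
    { toFun := F.preimage
      map_one' := F.preimage_id
      map_mul' := fun f g => F.preimage_comp g f
      map_zero' := F.map_injective (by simp)
      map_add' := fun f g => F.map_injective (by simp [F.map_add]) }
  have : IsLocalHom preimageHom := ⟨fun f hf => by
    rw [isUnit_iff_isIso] at hf ⊢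
    have : IsIso (F.preimage f) := hf
    exact F.map_preimage f ▸ inferInstanceAs (IsIso (F.map (F.preimage f)))⟩
  exact preimageHom.domain_isLocalRing

end Preadditive

section SplitIdempotents

variable {C : Type*} [Category C] [Preadditive C] [HasBinaryBiproducts C] [IsIdempotentComplete C]

theorem exists_iso_biprod_of_isSplitEpi {X Y : C} (r : X ⟶ Y) [IsSplitEpi r] :
    ∃ (Z : C) (φ : X ≅ Z ⊞ Y), φ.hom ≫ biprod.snd = r := by
  have : HasKernel (r ≫ section_ r) :=
    (Idempotents.isIdempotentComplete_iff_idempotents_have_kernels C).mp ‹_› X _ (by simp)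
  have kernel_r : kernel.ι (r ≫ section_ r) ≫ r = 0 :=
    zero_of_comp_mono (section_ r) (by simp)
  have isLimit_fork := isKernelOfComp (f := r) (section_ r) (r ≫ section_ r)
    (kernelIsKernel (r ≫ section_ r)) kernel_r rfl
  exact ⟨_, biprod.uniqueUpToIso _ _ (isBilimitBinaryBiconeOfIsSplitEpiOfKernel isLimit_fork),
    biprod.lift_snd _ _⟩

theorem isLocalRing_end_of_indecomposable {X : C} [IsArtinianRing (End X)]
    (hX : Indecomposable X) : IsLocalRing (End X) := by
  have : Nontrivial (End X) := ⟨𝟙 X, 0, fun h => hX.1 ((IsZero.iff_id_eq_zero X).mpr h)⟩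
  refine isLocalRing_of_isIdempotentElem fun e he => ?_
  obtain ⟨Y, i, r, hir, rfl⟩ := IsIdempotentComplete.idempotents_split X e he
  have : IsSplitEpi r := ⟨⟨⟨i, hir⟩⟩⟩
  obtain ⟨Z, φ, hφ⟩ := exists_iso_biprod_of_isSplitEpi r
  rcases hX.2 Z Y φ with hZ | hY
  · have : IsIso r := hφ ▸ inferInstanceAs (IsIso (φ.hom ≫ (isoZeroBiprod hZ).inv))
    exact Or.inr ((cancel_mono r).mp (by simp [hir, End.one_def]))
  · exact Or.inl ((congrArg (· ≫ i) (hY.eq_of_tgt r 0)).trans zero_comp)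

theorem exists_iso_biprod_of_isIso {L X A B : C} (φ : L ⊞ X ≅ A ⊞ B)
    [IsIso ((biprod.inl ≫ φ.hom ≫ biprod.fst) ≫ biprod.inl ≫ φ.inv ≫ biprod.fst)] :
    ∃ A' : C, Nonempty (A ≅ L ⊞ A') ∧ Nonempty (X ≅ A' ⊞ B) := by
  let a := biprod.inl ≫ φ.hom ≫ biprod.fst
  let r := biprod.inl ≫ φ.inv ≫ biprod.fst
  have : IsIso (a ≫ r) := ‹_›
  have : IsSplitEpi r := ⟨⟨⟨inv (a ≫ r) ≫ a, by simp⟩⟩⟩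
  obtain ⟨A', θ, hθ⟩ := exists_iso_biprod_of_isSplitEpi r
  let θ' := θ ≪≫ biprod.braiding A' L
  let ψ := φ ≪≫ biprod.mapIso θ' (Iso.refl B) ≪≫ biprod.associator L A' B
  have corner : biprod.inl ≫ ψ.hom ≫ biprod.fst = a ≫ r := by
    simp [ψ, θ', a, ← hθ]
  have : IsIso (biprod.inl ≫ ψ.hom ≫ biprod.fst) := by rwa [corner]
  exact ⟨A', ⟨θ'⟩, ⟨Biprod.isoElim ψ⟩⟩

theorem exists_iso_biprod_or_exists_iso_biprod {L X A B : C} [IsLocalRing (End L)]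
    (φ : L ⊞ X ≅ A ⊞ B) :
    (∃ A' : C, Nonempty (A ≅ L ⊞ A') ∧ Nonempty (X ≅ A' ⊞ B)) ∨
      ∃ B' : C, Nonempty (B ≅ L ⊞ B') ∧ Nonempty (X ≅ A ⊞ B') := by
  let ψ := φ ≪≫ biprod.braiding A B
  let throughA : End L := (biprod.inl ≫ φ.hom ≫ biprod.fst) ≫ biprod.inl ≫ φ.inv ≫ biprod.fst
  let throughB : End L := (biprod.inl ≫ ψ.hom ≫ biprod.fst) ≫ biprod.inl ≫ ψ.inv ≫ biprod.fst
  have throughB_eq : throughB =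
      (biprod.inl ≫ φ.hom ≫ biprod.snd) ≫ biprod.inr ≫ φ.inv ≫ biprod.fst := by
    have inl_braiding :
        (biprod.inl : B ⟶ B ⊞ A) ≫ biprod.lift biprod.snd biprod.fst = biprod.inr := by
      ext <;> simp
    simp [throughB, ψ, reassoc_of% inl_braiding]
  have sum_eq_one : throughA + throughB = 1 := by
    rw [throughB_eq]
    calc
      _ = biprod.inl ≫ φ.hom ≫ (biprod.fst ≫ biprod.inl + biprod.snd ≫ biprod.inr) ≫ φ.inv ≫
          biprod.fst := by
        simp only [throughA, Category.assoc, Preadditive.add_comp, Preadditive.comp_add]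
      _ = 𝟙 L := by rw [biprod.total]; simp
  rcases IsLocalRing.isUnit_or_isUnit_of_add_one sum_eq_one with h | h
  · rw [isUnit_iff_isIso] at h
    exact Or.inl (exists_iso_biprod_of_isIso φ)
  · rw [isUnit_iff_isIso] at h
    obtain ⟨B', hB, ⟨θ⟩⟩ := exists_iso_biprod_of_isIso ψ
    exact Or.inr ⟨B', hB, ⟨θ ≪≫ biprod.braiding B' A⟩⟩

end SplitIdempotents

section Retracts

variable {C : Type*} [Category C] [Preadditive C]

/-- The left ideal of `End X` generated by the idempotent of a retract `Y` of `X`. As composition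
is written in the opposite order to multiplication in `End X`, it consists of the endomorphisms
factoring as `h.r ≫ f`. -/
def retractIdeal {X Y : C} (h : Retract Y X) : Ideal (End X) :=
  Ideal.span {h.r ≫ h.i}

theorem retractIdeal_trans_lt {X Y Z : C} (h : Retract Z Y) (k : Retract Y X) (hr : ¬ IsIso h.r) :
    retractIdeal (h.trans k) < retractIdeal k := by
  refine lt_of_le_not_ge ?_ fun hle => hr ?_
  · rw [retractIdeal, Ideal.span_singleton_le_iff_mem]
    exact Ideal.mem_span_singleton'.mpr ⟨k.r ≫ h.r ≫ h.i ≫ k.i, by simp [End.mul_def]⟩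
  · obtain ⟨a, ha⟩ := Ideal.mem_span_singleton'.mp (hle (Ideal.mem_span_singleton_self _))
    have : IsSplitMono h.r := ⟨⟨⟨h.i ≫ k.i ≫ a ≫ k.r, by
      simpa [End.mul_def] using congrArg (fun f => k.i ≫ f ≫ k.r) ha⟩⟩⟩
    exact isIso_of_mono_of_isSplitEpi h.r

theorem isZero_of_isIso_biprod_fst [HasBinaryBiproducts C] (X Y : C)
    [IsIso (biprod.fst : X ⊞ Y ⟶ X)] : IsZero Y :=
  IsZero.of_mono_eq_zero (biprod.inr : Y ⟶ X ⊞ Y) ((cancel_mono biprod.fst).mp (by simp))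

end Retracts

section FiniteBiproducts

variable {C : Type*} [Category C] [Preadditive C] [HasFiniteBiproducts C]

attribute [local instance] hasBinaryBiproducts_of_finite_biproducts

/-- The isomorphism splitting the `j`-th summand off a finite biproduct. -/
noncomputable def biproductSuccAboveIso {n : ℕ} (f : Fin (n + 1) → C) (j : Fin (n + 1)) :
    ⨁ f ≅ f j ⊞ ⨁ fun i => f (j.succAbove i) where
  hom := biprod.lift (biproduct.π f j) (biproduct.lift fun i => biproduct.π f (j.succAbove i))
  inv := biprod.desc (biproduct.ι f j) (biproduct.desc fun i => biproduct.ι f (j.succAbove i))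
  hom_inv_id := by
    rw [biprod.lift_desc, biproduct.lift_desc, ← biproduct.total, Fin.sum_univ_succAbove _ j]
  inv_hom_id := by
    ext i i'
    · simp
    · simp [biproduct.ι_π_ne f (Fin.succAbove_ne j i).symm]
    · simp [biproduct.ι_π_ne f (Fin.succAbove_ne j i)]
    · classical
      simp [biproduct.ι_π]

theorem isZero_biproduct_of_isEmpty {ι : Type*} [Finite ι] [IsEmpty ι] (f : ι → C) :
    IsZero (⨁ f) :=
  (IsZero.iff_id_eq_zero _).mpr (biproduct.hom_ext _ _ isEmptyElim)

/-- `X` is a finite direct sum of objects satisfying `P`. -/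
def IsFiniteBiproductOf (P : ObjectProperty C) : ObjectProperty C := fun X =>
  ∃ (n : ℕ) (f : Fin n → C), (∀ i, P (f i)) ∧ Nonempty (X ≅ ⨁ f)

namespace IsFiniteBiproductOf

variable {P Q : ObjectProperty C} {X Y : C}

theorem of_iso (φ : X ≅ Y) : IsFiniteBiproductOf P X → IsFiniteBiproductOf P Y := by
  rintro ⟨n, f, hf, ⟨ψ⟩⟩
  exact ⟨n, f, hf, ⟨φ.symm ≪≫ ψ⟩⟩

theorem mono (hPQ : P ≤ Q) : IsFiniteBiproductOf P X → IsFiniteBiproductOf Q X := by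
  rintro ⟨n, f, hf, hX⟩
  exact ⟨n, f, fun i => hPQ _ (hf i), hX⟩

theorem of_isZero (hX : IsZero X) : IsFiniteBiproductOf P X :=
  ⟨0, Fin.elim0, fun i => i.elim0, ⟨hX.iso (isZero_biproduct_of_isEmpty _)⟩⟩

theorem of_prop (hX : P X) : IsFiniteBiproductOf P X :=
  ⟨1, fun _ => X, fun _ => hX, ⟨(biproductUniqueIso fun _ : Fin 1 => X).symm⟩⟩

theorem biprod_of_prop {L : C} (hL : P L) :
    IsFiniteBiproductOf P X → IsFiniteBiproductOf P (L ⊞ X) := by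
  rintro ⟨n, f, hf, ⟨φ⟩⟩
  exact ⟨n + 1, Fin.cons L f, Fin.cases hL hf, ⟨biprod.mapIso (Iso.refl L) φ ≪≫
    (biproductSuccAboveIso (Fin.cons L f : Fin (n + 1) → C) 0).symm⟩⟩

theorem biprod : IsFiniteBiproductOf P X → IsFiniteBiproductOf P Y →
    IsFiniteBiproductOf P (X ⊞ Y) := by
  rintro ⟨n, f, hf, ⟨φ⟩⟩ hY
  induction n generalizing X with
  | zero => exact hY.of_iso (isoZeroBiprod ((isZero_biproduct_of_isEmpty f).of_iso φ))
  | succ n ih =>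
    have hrest := ih (fun i => f i.succ) (fun i => hf _) (Iso.refl _)
    exact (hrest.biprod_of_prop (hf 0)).of_iso ((biprod.associator _ _ Y).symm ≪≫
      biprod.mapIso ((biproductSuccAboveIso f 0).symm ≪≫ φ.symm) (Iso.refl Y))

end IsFiniteBiproductOf

/-- The property of having a local endomorphism ring. -/
def localEnd (C : Type*) [Category C] [Preadditive C] : ObjectProperty C := fun X =>
  IsLocalRing (End X)

theorem IsFiniteBiproductOf.of_biprod [IsIdempotentComplete C] {P : ObjectProperty C}
    (hP : P ≤ localEnd C) {A B : C} :
    IsFiniteBiproductOf P (A ⊞ B) → IsFiniteBiproductOf P A := by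
  rintro ⟨n, f, hf, ⟨φ⟩⟩
  induction n generalizing A B with
  | zero =>
    exact of_isZero ((biprod_isZero_iff A B).mp ((isZero_biproduct_of_isEmpty f).of_iso φ)).1
  | succ n ih =>
    have : IsLocalRing (End (f 0)) := hP _ (hf 0)
    rcases exists_iso_biprod_or_exists_iso_biprod ((biproductSuccAboveIso f 0).symm ≪≫ φ.symm) with
      ⟨A', ⟨α⟩, ⟨ψ⟩⟩ | ⟨B', -, ⟨ψ⟩⟩
    · exact ((ih _ (fun i => hf _) ψ.symm).biprod_of_prop (hf 0)).of_iso α.symm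
    · exact ih _ (fun i => hf _) ψ.symm

section Functor

variable {D : Type*} [Category D] [Preadditive D] [HasFiniteBiproducts D] (F : C ⥤ D) [F.Additive]

theorem IsFiniteBiproductOf.obj {P : ObjectProperty C} {Q : ObjectProperty D}
    (hPQ : ∀ X, P X → Q (F.obj X)) {X : C} :
    IsFiniteBiproductOf P X → IsFiniteBiproductOf Q (F.obj X) := by
  rintro ⟨n, f, hf, ⟨φ⟩⟩
  exact ⟨n, fun i => F.obj (f i), fun i => hPQ _ (hf i), ⟨F.mapIso φ ≪≫ F.mapBiproduct f⟩⟩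

theorem IsFiniteBiproductOf.essImage {Y : D} : IsFiniteBiproductOf F.essImage Y → F.essImage Y := by
  rintro ⟨n, f, hf, ⟨φ⟩⟩
  choose g e using fun i => hf i
  exact ⟨⨁ g, ⟨F.mapBiproduct g ≪≫ biproduct.mapIso (fun i => (e i).some) ≪≫ φ.symm⟩⟩

end Functor

open Idempotents in
theorem isIdempotentComplete_of_isFiniteBiproductOf_localEnd
    (h : ∀ X : C, IsFiniteBiproductOf (localEnd C) X) : IsIdempotentComplete C := by
  have : HasFiniteBiproducts (Karoubi C) := Karoubi.karoubi_hasFiniteBiproducts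
  let F := toKaroubi C
  have localEnd_obj (X : C) (hX : localEnd C X) : (localEnd (Karoubi C) ⊓ F.essImage) (F.obj X) :=
    have : IsLocalRing (End X) := hX
    ⟨isLocalRing_end_obj F X, F.obj_mem_essImage X⟩
  have : F.EssSurj := ⟨fun P => by
    have biprod_complement : IsFiniteBiproductOf (localEnd _ ⊓ F.essImage) (P ⊞ P.complement) :=
      ((h P.X).obj F localEnd_obj).of_iso (Karoubi.decomposition P).symm
    exact ((biprod_complement.of_biprod inf_le_left).mono inf_le_right).essImage F⟩
  have : F.IsEquivalence := {}
  exact (isIdempotentComplete_iff_of_equivalence F.asEquivalence).mpr inferInstance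

theorem isFiniteBiproductOf_indecomposable (X : C) [IsArtinianRing (End X)] :
    IsFiniteBiproductOf (Indecomposable (C := C)) X := by
  suffices retract : ∀ (I : Ideal (End X)) (Y : C) (k : Retract Y X), retractIdeal k = I →
      IsFiniteBiproductOf (Indecomposable (C := C)) Y from retract _ X (Retract.refl X) rfl
  intro I
  induction I using WellFoundedLT.induction with
  | ind I ih =>
  rintro Y k rfl
  have summand {Y₁ Y₂ : C} (φ : Y ≅ Y₁ ⊞ Y₂) (hY₂ : ¬ IsZero Y₂) :
      IsFiniteBiproductOf (Indecomposable (C := C)) Y₁ := by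
    let h : Retract Y₁ Y := ⟨biprod.inl ≫ φ.inv, φ.hom ≫ biprod.fst, by simp⟩
    refine ih _ (retractIdeal_trans_lt h k fun hr => hY₂ ?_) _ (h.trans k) rfl
    have : IsIso (biprod.fst : Y₁ ⊞ Y₂ ⟶ Y₁) := IsIso.of_isIso_comp_left φ.hom _
    exact isZero_of_isIso_biprod_fst Y₁ Y₂
  by_cases hzero : IsZero Y
  · exact .of_isZero hzero
  by_cases hind : Indecomposable Y
  · exact .of_prop hind
  obtain ⟨Y₁, Y₂, φ, hY₁, hY₂⟩ : ∃ Y₁ Y₂, ∃ _ : Y ≅ Y₁ ⊞ Y₂, ¬ IsZero Y₁ ∧ ¬ IsZero Y₂ := by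
    simpa [Indecomposable, hzero, not_or] using hind
  exact ((summand φ hY₂).biprod (summand (φ ≪≫ biprod.braiding _ _) hY₁)).of_iso φ.symm

theorem isFiniteBiproductOf_localEnd [IsIdempotentComplete C] [∀ X : C, IsArtinianRing (End X)]
    (X : C) : IsFiniteBiproductOf (localEnd C) X :=
  (isFiniteBiproductOf_indecomposable X).mono fun _ => isLocalRing_end_of_indecomposable

theorem exists_iso_of_biprod_iso_biproduct {L X : C} [IsLocalRing (End L)] {s : ℕ}
    (g : Fin (s + 1) → C) (hg : ∀ j, IsLocalRing (End (g j))) (φ : L ⊞ X ≅ ⨁ g) :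
    ∃ j, Nonempty (L ≅ g j) ∧ Nonempty (X ≅ ⨁ fun i => g (j.succAbove i)) := by
  let a (j) : L ⟶ g j := biprod.inl ≫ φ.hom ≫ biproduct.π g j
  let b (j) : g j ⟶ L := biproduct.ι g j ≫ φ.inv ≫ biprod.fst
  let through (j) : End L := a j ≫ b j
  have sum_eq_one : ∑ j, through j = 1 := by
    calc ∑ j, a j ≫ b j = biprod.inl ≫ φ.hom ≫ (∑ j, biproduct.π g j ≫ biproduct.ι g j) ≫
          φ.inv ≫ biprod.fst := by
          simp only [a, b, Preadditive.comp_sum, Preadditive.sum_comp, Category.assoc]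
      _ = 𝟙 L := by simp
  obtain ⟨j, -, hj⟩ := IsLocalRing.exists_of_isUnit_sum (sum_eq_one ▸ isUnit_one)
  have : IsIso (a j ≫ b j) := (isUnit_iff_isIso _).mp hj
  have : IsSplitMono (a j) := ⟨⟨⟨b j ≫ inv (a j ≫ b j), by simp [← Category.assoc]⟩⟩⟩
  have := hg j
  have : IsIso (a j) := isIso_of_isSplitMono_of_isLocalRing_end (not_isZero_of_nontrivial_end L) _
  let ψ := φ ≪≫ biproductSuccAboveIso g j
  have corner : biprod.inl ≫ ψ.hom ≫ biprod.fst = a j := by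
    simp [ψ, a, biproductSuccAboveIso]
  have : IsIso (biprod.inl ≫ ψ.hom ≫ biprod.fst) := by rwa [corner]
  exact ⟨j, ⟨asIso (a j)⟩, ⟨Biprod.isoElim ψ⟩⟩

theorem exists_equiv_of_biproduct_iso {r s : ℕ} (f : Fin r → C) (g : Fin s → C)
    (hf : ∀ i, IsLocalRing (End (f i))) (hg : ∀ j, IsLocalRing (End (g j)))
    (φ : ⨁ f ≅ ⨁ g) : ∃ σ : Fin r ≃ Fin s, ∀ i, Nonempty (f i ≅ g (σ i)) := by
  induction r generalizing s with
  | zero =>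
    have hzero : IsZero (⨁ g) := (isZero_biproduct_of_isEmpty f).of_iso φ.symm
    have : IsEmpty (Fin s) := ⟨fun j =>
      have := hg j
      not_isZero_of_nontrivial_end (g j) (.of_mono (biproduct.ι g j) hzero)⟩
    exact ⟨Equiv.equivOfIsEmpty _ _, fun i => i.elim0⟩
  | succ r ih =>
    have := hf 0
    cases s with
    | zero =>
      exact absurd (.of_mono (biproduct.ι f 0) ((isZero_biproduct_of_isEmpty g).of_iso φ))
        (not_isZero_of_nontrivial_end (f 0))
    | succ s =>
      obtain ⟨j, hj, ⟨ψ⟩⟩ :=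
        exists_iso_of_biprod_iso_biproduct g hg ((biproductSuccAboveIso f 0).symm ≪≫ φ)
      obtain ⟨σ, hσ⟩ := ih _ _ (fun i => hf _) (fun i => hg _) ψ
      refine ⟨((finSuccEquiv r).trans σ.optionCongr).trans (finSuccEquiv' j).symm,
        Fin.cases ?_ fun i => ?_⟩
      · simpa using hj
      · simpa using hσ i

end FiniteBiproducts

theorem krullSchmidt_iff_idempotentComplete_general
    (C : Type*) [Category C] [Preadditive C] [HasFiniteBiproducts C]
    [∀ x : C, IsArtinianRing (End x)] :
    IsKrullSchmidt C ↔ IsIdempotentComplete C := by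
  refine ⟨fun h => isIdempotentComplete_of_isFiniteBiproductOf_localEnd h.1, fun _ =>
    ⟨isFiniteBiproductOf_localEnd, ?_⟩⟩
  rintro r s f g hf hg ⟨φ⟩
  obtain ⟨σ, hσ⟩ := exists_equiv_of_biproduct_iso f g hf hg φ
  obtain rfl : r = s := by simpa using Fintype.card_congr σ
  exact ⟨rfl, σ, hσ⟩

/-- An additive category enriched in finite-dimensional `k`-vector spaces is
Krull–Schmidt if and only if all idempotents split. -/
theorem krullSchmidt_iff_idempotentComplete
    (k : Type*) [Field k] (C : Type*) [Category C] [Preadditive C]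
    [HasFiniteBiproducts C] [Linear k C]
    [∀ x y : C, FiniteDimensional k (x ⟶ y)] :
    IsKrullSchmidt C ↔ IsIdempotentComplete C := by
  have (x : C) : FiniteDimensional k (End x) := inferInstanceAs (FiniteDimensional k (x ⟶ x))
  have (x : C) : IsArtinianRing (End x) := .of_finite k (End x)
  exact krullSchmidt_iff_idempotentComplete_general C
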